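/- Let T be a tree. Then the following statements are equivalent: (i) the ultrametric space (V(T), d_l) is separable for every non-degenerate labeling l : V(T) → ℝ≥0; (ii) there exists a non-degenerate labeling l : V(T) → ℝ≥0 for which the ultrametric space (V(T), d_l) is locally finite; (iii) there exists a non-degenerate labeling l : V(T) → ℝ≥0 for which the ultrametric space (V(T), d_l) is separable. -/

import Mathlib

open SimpleGraph

/-- For a tree `G` with labeling `l`, the "ultrametric" `d_l`: the maximum of the labels of the
vertices of the unique path joining `u` and `v` (and `0` if `u = v`). -/
noncomputable def treeDist {V : Type*} (G : SimpleGraph V) (hG : G.IsTree) (l : V → NNReal)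
    (u v : V) : NNReal :=
  letI := Classical.decEq V
  if u = v then 0 else ((hG.existsUnique_path u v).choose.support.map l).foldr max 0

/-- A labeling is non-degenerate if `max {l u, l v} > 0` for every edge `{u, v}`. -/
def Nondeg {V : Type*} (G : SimpleGraph V) (l : V → NNReal) : Prop :=
  ∀ u v : V, G.Adj u v → 0 < max (l u) (l v)

/-- A distance function is separable if there is a countable dense subset. -/
def SeparableWith {α : Type*} (d : α → α → NNReal) : Prop :=
  ∃ S : Set α, S.Countable ∧ ∀ x : α, ∀ ε : NNReal, 0 < ε → ∃ s ∈ S, d x s < ε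

/-- A set is bounded if it is contained in a closed ball of positive radius. -/
def BoundedWith {α : Type*} (d : α → α → NNReal) (A : Set α) : Prop :=
  ∃ c : α, ∃ r : NNReal, 0 < r ∧ ∀ x ∈ A, d c x ≤ r

/-- A distance function is locally finite if every bounded set is finite. -/
def LocallyFiniteWith {α : Type*} (d : α → α → NNReal) : Prop :=
  ∀ A : Set α, BoundedWith d A → A.Finite

/-- A graph is a ray if its vertices can be enumerated without repetition as
`x₁, x₂, …` with edges exactly `{xₙ, xₙ₊₁}`. -/
def IsRay {W : Type*} (R : SimpleGraph W) : Prop :=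
  ∃ v : ℕ → W, Function.Bijective v ∧
    ∀ a b : W, R.Adj a b ↔ ∃ n : ℕ, (a = v n ∧ b = v (n + 1)) ∨ (a = v (n + 1) ∧ b = v n)

/-- A tree is a star graph if some vertex `c` (the center) is adjacent to every other vertex. -/
def IsStar {W : Type*} (S : SimpleGraph W) : Prop :=
  S.IsTree ∧ ∃ c : W, ∀ v : W, v ≠ c → S.Adj c v

/-!
Each of the three conditions says that `V` is countable. Suppose `S` is dense for `d_l`. A vertex
with a positive label is isolated, hence lies in `S`. A vertex `x ∉ S` therefore has label `0`, so
by non-degeneracy a neighbour `y` of `x` has a positive label and lies in `S`; a point `s ∈ S`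
closer to `x` than `l y` is joined to `x` by a path avoiding `y`, so `x` lies on the path from `y`
to `s`. Thus the paths between points of `S` cover the tree, and if `S` is countable there are only
countably many of them. Conversely, if `V` is countable then the labels can be chosen positive and
tending to infinity, which makes every ball finite.
-/

/-- Density of `S` for a distance function `d`, in the form in which `SeparableWith` asks for it:
every point is approximated by points of `S` in the second argument of `d`. -/
def DenseWith {α : Type*} (d : α → α → NNReal) (S : Set α) : Prop :=
  ∀ x : α, ∀ ε : NNReal, 0 < ε → ∃ s ∈ S, d x s < ε

section DistanceFunction

variable {α : Type*} {d : α → α → NNReal}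

theorem separableWith_of_countable [Countable α] (hd : ∀ x, d x x = 0) : SeparableWith d :=
  ⟨Set.univ, Set.countable_univ, fun x _ hε => ⟨x, Set.mem_univ x, (hd x).trans_lt hε⟩⟩

theorem LocallyFiniteWith.countable (h : LocallyFiniteWith d) : Countable α := by
  rcases isEmpty_or_nonempty α with _ | ⟨⟨c⟩⟩
  · infer_instance
  have ball_finite (n : ℕ) : {x | d c x ≤ n + 1}.Finite :=
    h _ ⟨c, n + 1, by positivity, fun _ hx => hx⟩
  refine Set.countable_univ_iff.mp <|
    (Set.countable_iUnion fun n => (ball_finite n).countable).mono fun x _ => ?_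
  obtain ⟨n, hn⟩ := exists_nat_ge (d c x)
  exact Set.mem_iUnion.mpr ⟨n, hn.trans le_self_add⟩

end DistanceFunction

section Graph

variable {V : Type*} {G : SimpleGraph V}

theorem nondeg_of_forall_pos {l : V → NNReal} (hl : ∀ v, 0 < l v) : Nondeg G l :=
  fun u _ _ => lt_max_of_lt_left (hl u)

theorem countable_of_forall_exists_path_mem_support (hG : G.IsAcyclic) {S : Set V}
    (hS : S.Countable) (h : ∀ x, ∃ s ∈ S, ∃ t ∈ S, ∃ p : G.Path s t, x ∈ p.1.support) :
    Countable V := by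
  have : Countable S := hS
  have path_subsingleton := hG.subsingleton_path
  have cover_countable :
      (⋃ (s : S) (t : S) (p : G.Path (s : V) t), {x | x ∈ p.1.support}).Countable :=
    Set.countable_iUnion fun s => Set.countable_iUnion fun t => Set.countable_iUnion fun p =>
      (List.finite_toSet p.1.support).countable
  refine Set.countable_univ_iff.mp <| cover_countable.mono fun x _ => ?_
  obtain ⟨s, hs, t, ht, p, hxp⟩ := h x
  simp only [Set.mem_iUnion]
  exact ⟨⟨s, hs⟩, ⟨t, ht⟩, p, hxp⟩

end Graph

section Tree

variable {V : Type*} {G : SimpleGraph V} (hG : G.IsTree) (l : V → NNReal)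

theorem treeDist_self (u : V) : treeDist G hG l u u = 0 :=
  if_pos rfl

theorem label_le_treeDist_of_mem_support {u v w : V} (huv : u ≠ v) (p : G.Path u v)
    (hw : w ∈ p.1.support) : l w ≤ treeDist G hG l u v := by
  have choose_eq : (hG.existsUnique_path u v).choose = p.1 :=
    (hG.existsUnique_path u v).unique (hG.existsUnique_path u v).choose_spec.1 p.2
  rw [treeDist, if_neg huv, choose_eq]
  exact List.le_max_of_le' 0 (List.mem_map_of_mem hw) le_rfl

theorem label_left_le_treeDist {u v : V} (huv : u ≠ v) : l u ≤ treeDist G hG l u v := by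
  obtain ⟨p, hp⟩ := (hG.existsUnique_path u v).exists
  exact label_le_treeDist_of_mem_support hG l huv ⟨p, hp⟩ p.start_mem_support

theorem label_right_le_treeDist {u v : V} (huv : u ≠ v) : l v ≤ treeDist G hG l u v := by
  obtain ⟨p, hp⟩ := (hG.existsUnique_path u v).exists
  exact label_le_treeDist_of_mem_support hG l huv ⟨p, hp⟩ p.end_mem_support

variable {hG l}

theorem DenseWith.mem_of_label_pos {S : Set V} (hS : DenseWith (treeDist G hG l) S) {x : V}
    (hx : 0 < l x) : x ∈ S := by
  obtain ⟨s, hs, hlt⟩ := hS x (l x) hx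
  have x_eq_s : x = s := of_not_not fun hne => hlt.not_ge (label_left_le_treeDist hG l hne)
  exact x_eq_s ▸ hs

theorem DenseWith.exists_path_mem_support {S : Set V} (hS : DenseWith (treeDist G hG l) S)
    (hl : Nondeg G l) (x : V) : ∃ s ∈ S, ∃ t ∈ S, ∃ p : G.Path s t, x ∈ p.1.support := by
  by_cases hxS : x ∈ S
  · exact ⟨x, hxS, x, hxS, .nil, Walk.start_mem_support _⟩
  have ne_of_mem {s : V} (hs : s ∈ S) : x ≠ s := (ne_of_mem_of_not_mem hs hxS).symm
  obtain ⟨y, hxy⟩ : ∃ y, G.Adj x y := by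
    obtain ⟨s, hs, -⟩ := hS x 1 one_pos
    have := nontrivial_of_ne x s (ne_of_mem hs)
    exact hG.connected.preconnected.exists_adj_of_nontrivial x
  have hy : 0 < l y :=
    (lt_max_iff.mp (hl x y hxy)).resolve_left fun hx => hxS (hS.mem_of_label_pos hx)
  obtain ⟨s, hs, hlt⟩ := hS x (l y) hy
  obtain ⟨p, hp⟩ := (hG.existsUnique_path x s).exists
  have y_notMem_support : y ∉ p.support := fun hyp =>
    hlt.not_ge (label_le_treeDist_of_mem_support hG l (ne_of_mem hs) ⟨p, hp⟩ hyp)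
  refine ⟨y, hS.mem_of_label_pos hy, s, hs,
    ⟨.cons hxy.symm p, hp.cons y_notMem_support⟩, ?_⟩
  exact List.mem_cons_of_mem y p.start_mem_support

theorem separableWith_treeDist_iff_countable (hl : Nondeg G l) :
    SeparableWith (treeDist G hG l) ↔ Countable V := by
  refine ⟨?_, fun _ => separableWith_of_countable (treeDist_self hG l)⟩
  rintro ⟨S, hS, hdense : DenseWith (treeDist G hG l) S⟩
  exact countable_of_forall_exists_path_mem_support hG.isAcyclic hS
    (hdense.exists_path_mem_support hl)

theorem locallyFiniteWith_treeDist_of_finite_label_le (h : ∀ r, {v | l v ≤ r}.Finite) :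
    LocallyFiniteWith (treeDist G hG l) := by
  rintro A ⟨c, r, -, hA⟩
  refine ((h r).insert c).subset fun x hx => ?_
  exact or_iff_not_imp_left.mpr fun hne =>
    (label_right_le_treeDist hG l (Ne.symm hne)).trans (hA x hx)

variable (hG) in
theorem exists_locallyFiniteWith_treeDist_iff_countable :
    (∃ l : V → NNReal, Nondeg G l ∧ LocallyFiniteWith (treeDist G hG l)) ↔ Countable V := by
  refine ⟨fun ⟨_, _, hfin⟩ => hfin.countable, fun _ => ?_⟩
  obtain ⟨f, hf⟩ := exists_injective_nat V
  refine ⟨fun v => f v + 1, nondeg_of_forall_pos fun v => by positivity,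
    locallyFiniteWith_treeDist_of_finite_label_le fun r => ?_⟩
  refine ((Set.finite_Iic ⌊r⌋₊).preimage hf.injOn).subset fun v hv => ?_
  exact Nat.le_floor (le_self_add.trans hv)

end Tree

theorem forall_separable_iff_exists_locallyFinite_iff_exists_separable {V : Type*}
    (G : SimpleGraph V) (hG : G.IsTree) :
    ((∀ l : V → NNReal, Nondeg G l → SeparableWith (treeDist G hG l)) ↔
      ∃ l : V → NNReal, Nondeg G l ∧ LocallyFiniteWith (treeDist G hG l)) ∧
    ((∀ l : V → NNReal, Nondeg G l → SeparableWith (treeDist G hG l)) ↔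
      ∃ l : V → NNReal, Nondeg G l ∧ SeparableWith (treeDist G hG l)) := by
  have one_nondeg : Nondeg G (1 : V → NNReal) := nondeg_of_forall_pos fun _ => one_pos
  have forall_iff : (∀ l, Nondeg G l → SeparableWith (treeDist G hG l)) ↔ Countable V :=
    ⟨fun h => (separableWith_treeDist_iff_countable one_nondeg).mp (h 1 one_nondeg),
      fun hV _ hl => (separableWith_treeDist_iff_countable hl).mpr hV⟩
  have exists_iff : (∃ l, Nondeg G l ∧ SeparableWith (treeDist G hG l)) ↔ Countable V :=
    ⟨fun ⟨_, hl, hsep⟩ => (separableWith_treeDist_iff_countable hl).mp hsep,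
      fun hV => ⟨1, one_nondeg, (separableWith_treeDist_iff_countable one_nondeg).mpr hV⟩⟩
  exact ⟨forall_iff.trans (exists_locallyFiniteWith_treeDist_iff_countable hG).symm,
    forall_iff.trans exists_iff.symm⟩
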